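/- Let n ≥ 1 and let T be an n-periodic 2-triangulation on ℤ. Then the set of orbits of edges of T under translation by n (i.e., the quotient of T by the action e ↦ e+n) has exactly 2(2n−1) elements, of which exactly 2(n−1) are orbits of 2-relevant edges. -/

import Mathlib

/- Edges on the universal cover of the half-cylinder, modeled by the integers.
   An edge is an unordered pair of distinct integers, represented as an ordered
   pair `(a, b)` with `a < b` (validity). -/

namespace Multitriangulation

abbrev Edge := ℤ × ℤ

/-- Translate an edge by `t`: `[a,b] + t = [a+t, b+t]`. -/
def shift (e : Edge) (t : ℤ) : Edge := (e.1 + t, e.2 + t)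

/-- Two edges (as unordered pairs of integers) cross:
their endpoints strictly interleave. -/
def Crosses (e f : Edge) : Prop :=
  (min e.1 e.2 < min f.1 f.2 ∧ min f.1 f.2 < max e.1 e.2 ∧ max e.1 e.2 < max f.1 f.2) ∨
  (min f.1 f.2 < min e.1 e.2 ∧ min e.1 e.2 < max f.1 f.2 ∧ max f.1 f.2 < max e.1 e.2)

/-- A finite set of edges is an `l`-crossing if it consists of `l` pairwise
crossing edges. -/
def IsCrossing (l : ℕ) (S : Finset Edge) : Prop :=
  S.card = l ∧ ∀ e ∈ S, ∀ f ∈ S, e ≠ f → Crosses e f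

/-- A set of edges is `l`-crossing-free if no `l` of its edges pairwise cross. -/
def CrossingFree (l : ℕ) (E : Set Edge) : Prop :=
  ¬ ∃ S : Finset Edge, ↑S ⊆ E ∧ IsCrossing l S

/-- A set of edges is `n`-periodic if `e ∈ E ↔ e + n ∈ E`. -/
def Periodic (n : ℕ) (E : Set Edge) : Prop := ∀ e, e ∈ E ↔ shift e (n : ℤ) ∈ E

/-- All members are genuine edges `[a,b]` with `a < b`. -/
def ValidEdges (E : Set Edge) : Prop := ∀ e ∈ E, e.1 < e.2

/-- An `n`-periodic `k`-triangulation on `ℤ`: an `n`-periodic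
`(k+1)`-crossing-free set of edges that is maximal under inclusion among
`n`-periodic `(k+1)`-crossing-free sets of edges. -/
def IsTriangulation (n k : ℕ) (T : Set Edge) : Prop :=
  ValidEdges T ∧ Periodic n T ∧ CrossingFree (k+1) T ∧
  ∀ T', ValidEdges T' → Periodic n T' → CrossingFree (k+1) T' → T ⊆ T' → T' = T

/-- The orbit of an edge under translation by multiples of `n`. -/
def orbitOf (n : ℕ) (e : Edge) : Set Edge := {f | ∃ t : ℤ, f = shift e (t * n)}

/-! Call an edge blocked if it forms a 3-crossing with two edges of `T`. Maximality forces every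
non-edge of length at most `2n` to be blocked: adding the orbit of an unblocked non-edge `[a, b]`
creates a 3-crossing using both `[a, b]` and `[a + n, b + n]`, and this is impossible when `[a, b]`
is a longest unblocked non-edge.

As in a finite 2-triangulation, the edges then organize into 2-stars `s₀ < s₁ < s₂ < s₃ < s₄` with
relevant edges `[s₀, s₃]` and `[s₁, s₄]`: every `m` with `[m, m + 2n] ∉ T` is the middle vertex
`s₂` of one such star, and every edge of `T` of length greater than two is relevant in exactly one
star, in exactly one of the two ways. The exceptional vertices `m` form a single class modulo `n`,
so there are `2(n - 1)` orbits of relevant edges. The edges of length one and two lie in no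
3-crossing, hence all belong to `T` and add `2n` orbits. -/

section Translation

variable {n : ℕ} {E : Set Edge} {e f : Edge}

theorem shift_zero (e : Edge) : shift e 0 = e := by
  simp [shift]

theorem shift_shift (e : Edge) (s t : ℤ) : shift (shift e s) t = shift e (s + t) := by
  simp [shift, add_assoc]

theorem crosses_shift_iff {t : ℤ} : Crosses (shift e t) (shift f t) ↔ Crosses e f := by
  simp only [Crosses, shift]
  omega

theorem crosses_shift_left_iff {t : ℤ} : Crosses (shift e t) f ↔ Crosses e (shift f (-t)) := by
  simp only [Crosses, shift]
  omega

theorem Periodic.shift_mem_iff (hE : Periodic n E) (t : ℤ) : shift e (t * n) ∈ E ↔ e ∈ E := by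
  induction t with
  | zero => simp [shift_zero]
  | succ k ih => rw [← ih, hE (shift e (k * n)), shift_shift, add_one_mul]
  | pred k ih => rw [← ih, hE (shift e ((-k - 1) * n)), shift_shift, sub_one_mul, sub_add_cancel]

theorem Periodic.add_mem_iff (hE : Periodic n E) (t : ℤ) {a b : ℤ} :
    (a + t * n, b + t * n) ∈ E ↔ (a, b) ∈ E :=
  hE.shift_mem_iff (e := (a, b)) t

theorem Periodic.add_mem (hE : Periodic n E) {a b : ℤ} (h : (a, b) ∈ E) :
    (a + n, b + n) ∈ E :=
  (hE (a, b)).1 h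

theorem Periodic.sub_mem (hE : Periodic n E) {a b : ℤ} (h : (a, b) ∈ E) :
    (a - n, b - n) ∈ E :=
  (hE (a - n, b - n)).2 (by simpa [shift] using h)

theorem mem_orbitOf_self (n : ℕ) (e : Edge) : e ∈ orbitOf n e :=
  ⟨0, by simp [shift_zero]⟩

theorem orbitOf_shift (t : ℤ) : orbitOf n (shift e (t * n)) = orbitOf n e := by
  ext f
  constructor
  · rintro ⟨s, rfl⟩
    exact ⟨t + s, by rw [shift_shift, add_mul]⟩
  · rintro ⟨s, rfl⟩
    exact ⟨s - t, by rw [shift_shift, ← add_mul, add_sub_cancel]⟩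

theorem orbitOf_eq_orbitOf_iff :
    orbitOf n e = orbitOf n f ↔ ∃ t : ℤ, f = shift e (t * n) := by
  constructor
  · intro h
    have hf : f ∈ orbitOf n e := h ▸ mem_orbitOf_self n f
    exact hf
  · rintro ⟨t, rfl⟩
    exact (orbitOf_shift t).symm

theorem Periodic.union_orbitOf (hE : Periodic n E) (e : Edge) :
    Periodic n (E ∪ orbitOf n e) := by
  intro f
  refine or_congr (hE f) ?_
  have key : orbitOf n (shift f n) = orbitOf n f := by simpa using orbitOf_shift (n := n) (e := f) 1
  change (∃ t : ℤ, f = shift e (t * n)) ↔ ∃ t : ℤ, shift f n = shift e (t * n)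
  rw [← orbitOf_eq_orbitOf_iff, ← orbitOf_eq_orbitOf_iff, key]

end Translation

section Crossing

variable {n k l : ℕ} {E T : Set Edge} {e f : Edge}

theorem Crosses.symm (h : Crosses e f) : Crosses f e :=
  Or.symm h

theorem Crosses.ne (h : Crosses e f) : e ≠ f := by
  rintro rfl
  simp only [Crosses] at h
  omega

theorem crosses_iff_of_lt {a b c d : ℤ} (hab : a < b) (hcd : c < d) :
    Crosses (a, b) (c, d) ↔ a < c ∧ c < b ∧ b < d ∨ c < a ∧ a < d ∧ d < b := by
  simp only [Crosses, min_eq_left hab.le, max_eq_right hab.le, min_eq_left hcd.le,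
    max_eq_right hcd.le]

/- Every other edge of the crossing has exactly one endpoint strictly inside `e`, and these
endpoints are distinct. -/
theorem IsCrossing.le_length {S : Finset Edge} (hS : IsCrossing l S) (he : e ∈ S)
    (hlt : e.1 < e.2) : (l : ℤ) ≤ e.2 - e.1 := by
  have hle : (S.erase e).card ≤ (Finset.Ioo e.1 e.2).card := by
    refine Finset.card_le_card_of_injOn
      (fun f => if e.1 < f.1 ∧ f.1 < e.2 then f.1 else f.2) ?_ ?_
    · intro f hf
      obtain ⟨hfe, hfS⟩ := Finset.mem_erase.1 hf
      have hcross := hS.2 f hfS e he hfe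
      simp only [Crosses, Finset.coe_Ioo, Set.mem_Ioo] at hcross ⊢
      split_ifs <;> omega
    · intro f hf g hg hfg
      obtain ⟨hfe, hfS⟩ := Finset.mem_erase.1 hf
      obtain ⟨hge, hgS⟩ := Finset.mem_erase.1 hg
      by_contra hne
      have hcross := hS.2 f hfS g hgS hne
      have hcross_f := hS.2 f hfS e he hfe
      have hcross_g := hS.2 g hgS e he hge
      simp only [Crosses] at hcross hcross_f hcross_g hfg
      split_ifs at hfg <;> omega
  rw [Finset.card_erase_of_mem he, hS.1, Int.card_Ioo] at hle
  omega

theorem CrossingFree.length_le (hfree : CrossingFree (k + 1) E) (hE : Periodic n E) (hn : 1 ≤ n)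
    (he : e ∈ E) : e.2 - e.1 ≤ k * n := by
  by_contra! hlong
  have hcross : ∀ i j : ℕ, i < j → j ≤ k →
      Crosses (shift e ((i : ℤ) * n)) (shift e ((j : ℤ) * n)) := by
    intro i j hij hjk
    have hlt : (i : ℤ) * n < j * n := by gcongr
    have hle : ((j : ℤ) - i) * n ≤ k * n := by gcongr; omega
    rw [sub_mul] at hle
    simp only [Crosses, shift]
    omega
  refine hfree ⟨(Finset.range (k + 1)).image fun i : ℕ => shift e ((i : ℤ) * n), ?_, ?_, ?_⟩
  · intro f hf
    obtain ⟨i, -, rfl⟩ := Finset.mem_image.1 (Finset.mem_coe.1 hf)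
    exact (hE.shift_mem_iff i).2 he
  · rw [Finset.card_image_of_injective, Finset.card_range]
    intro i j hij
    simpa [shift, show n ≠ 0 by omega] using hij
  · simp only [Finset.mem_image, Finset.mem_range]
    rintro _ ⟨i, hi, rfl⟩ _ ⟨j, hj, rfl⟩ hne
    rcases lt_trichotomy i j with hij | rfl | hij
    · exact hcross i j hij (by omega)
    · exact absurd rfl hne
    · exact (hcross j i hij (by omega)).symm

theorem IsTriangulation.validEdges (hT : IsTriangulation n k T) : ValidEdges T := hT.1

theorem IsTriangulation.periodic (hT : IsTriangulation n k T) : Periodic n T := hT.2.1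

theorem IsTriangulation.crossingFree (hT : IsTriangulation n k T) : CrossingFree (k + 1) T :=
  hT.2.2.1

theorem IsTriangulation.lt (hT : IsTriangulation n k T) {a b : ℤ} (h : (a, b) ∈ T) : a < b :=
  hT.validEdges _ h

theorem IsTriangulation.length_le (hT : IsTriangulation n k T) (hn : 1 ≤ n) (he : e ∈ T) :
    e.2 - e.1 ≤ k * n :=
  hT.crossingFree.length_le hT.periodic hn he

theorem IsTriangulation.not_crossingFree_union_orbitOf (hT : IsTriangulation n k T)
    (he : e.1 < e.2) (heT : e ∉ T) : ¬CrossingFree (k + 1) (T ∪ orbitOf n e) := by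
  intro hfree
  have hvalid : ValidEdges (T ∪ orbitOf n e) := by
    rintro f (hf | ⟨t, rfl⟩)
    · exact hT.validEdges f hf
    · simpa [shift] using he
  have hmax := hT.2.2.2 _ hvalid (hT.periodic.union_orbitOf e) hfree Set.subset_union_left
  exact heT (hmax ▸ Or.inr (mem_orbitOf_self n e))

theorem IsTriangulation.mem_of_length_le (hT : IsTriangulation n k T) (he : e.1 < e.2)
    (hlen : e.2 - e.1 ≤ k) : e ∈ T := by
  by_contra heT
  refine hT.not_crossingFree_union_orbitOf he heT ?_
  rintro ⟨S, hS, hcross⟩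
  refine hT.crossingFree ⟨S, fun f hf => (hS hf).resolve_right ?_, hcross⟩
  rintro ⟨t, rfl⟩
  have hle := hcross.le_length hf (by simpa [shift] using he)
  simp only [shift, Nat.cast_add, Nat.cast_one] at hle
  omega

end Crossing

section Reflection

variable {n k l : ℕ} {E T : Set Edge} {e f : Edge} {a b : ℤ}

/-- The image of an edge under the reflection `x ↦ -x`; endpoints are swapped so that valid
edges stay valid. -/
def reflectEdge (e : Edge) : Edge := (-e.2, -e.1)

/-- The mirror image of a set of edges under `x ↦ -x`, used to halve left/right symmetric
arguments. -/
def reflect (E : Set Edge) : Set Edge := reflectEdge ⁻¹' E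

theorem mem_reflect : (a, b) ∈ reflect E ↔ (-b, -a) ∈ E := Iff.rfl

theorem reflectEdge_involutive : Function.Involutive reflectEdge := fun e => by
  simp [reflectEdge]

theorem reflect_involutive : Function.Involutive reflect := fun E => by
  simp [reflect, ← Set.preimage_comp, reflectEdge_involutive.comp_self]

theorem reflectEdge_shift (e : Edge) (t : ℤ) :
    reflectEdge (shift e t) = shift (reflectEdge e) (-t) := by
  simp [reflectEdge, shift, add_comm]

theorem crosses_reflectEdge_iff :
    Crosses (reflectEdge e) (reflectEdge f) ↔ Crosses e f := by
  simp only [Crosses, reflectEdge]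
  omega

theorem ValidEdges.reflect (hE : ValidEdges E) : ValidEdges (reflect E) := fun e he => by
  simpa [reflectEdge] using hE _ he

theorem Periodic.reflect (hE : Periodic n E) : Periodic n (reflect E) := fun e => by
  have h := hE.shift_mem_iff (e := reflectEdge e) (-1)
  rw [neg_one_mul, ← reflectEdge_shift] at h
  exact h.symm

theorem CrossingFree.reflect (hE : CrossingFree l E) : CrossingFree l (reflect E) := by
  rintro ⟨S, hS, hcard, hcross⟩
  refine hE ⟨S.image reflectEdge, ?_, ?_, ?_⟩
  · rw [Finset.coe_image]
    exact Set.image_subset_iff.2 hS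
  · rw [Finset.card_image_of_injective _ reflectEdge_involutive.injective, hcard]
  · simp only [Finset.mem_image]
    rintro _ ⟨e, he, rfl⟩ _ ⟨f, hf, rfl⟩ hne
    exact crosses_reflectEdge_iff.2 (hcross e he f hf (ne_of_apply_ne _ hne))

theorem IsTriangulation.reflect (hT : IsTriangulation n k T) :
    IsTriangulation n k (reflect T) := by
  refine ⟨hT.validEdges.reflect, hT.periodic.reflect, hT.crossingFree.reflect,
    fun T' hvalid hper hfree hsub => ?_⟩
  have hsub' : T ⊆ Multitriangulation.reflect T' := by
    rw [← reflect_involutive T]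
    exact Set.preimage_mono hsub
  rw [← hT.2.2.2 _ hvalid.reflect hper.reflect hfree.reflect hsub', reflect_involutive T']

end Reflection

section Blocked

variable {E : Set Edge} {e : Edge} {a b : ℤ}

theorem not_crossingFree_three_iff :
    ¬CrossingFree 3 E ↔
      ∃ e ∈ E, ∃ f ∈ E, ∃ g ∈ E, Crosses e f ∧ Crosses e g ∧ Crosses f g := by
  rw [CrossingFree, not_not]
  constructor
  · rintro ⟨S, hS, hcard, hcross⟩
    obtain ⟨e, f, g, hef, heg, hfg, rfl⟩ := Finset.card_eq_three.1 hcard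
    exact ⟨e, hS (by simp), f, hS (by simp), g, hS (by simp), hcross e (by simp) f (by simp) hef,
      hcross e (by simp) g (by simp) heg, hcross f (by simp) g (by simp) hfg⟩
  · rintro ⟨e, he, f, hf, g, hg, hef, heg, hfg⟩
    refine ⟨{e, f, g}, by simp [Set.insert_subset_iff, he, hf, hg],
      Finset.card_eq_three.2 ⟨e, f, g, hef.ne, heg.ne, hfg.ne, rfl⟩, ?_⟩
    simp only [Finset.mem_insert, Finset.mem_singleton]
    rintro _ (rfl | rfl | rfl) _ (rfl | rfl | rfl) hne <;>
      first | exact absurd rfl hne | assumption | exact Crosses.symm ‹_›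

theorem CrossingFree.not_interleave (hE : CrossingFree 3 E) {a₁ a₂ a₃ b₁ b₂ b₃ : ℤ}
    (h₁ : (a₁, b₁) ∈ E) (h₂ : (a₂, b₂) ∈ E) (h₃ : (a₃, b₃) ∈ E) :
    ¬(a₁ < a₂ ∧ a₂ < a₃ ∧ a₃ < b₁ ∧ b₁ < b₂ ∧ b₂ < b₃) := fun _ =>
  not_crossingFree_three_iff.2 ⟨_, h₁, _, h₂, _, h₃, by simp only [Crosses]; omega⟩ hE

/-- `e` forms a 3-crossing with two edges of `E`. -/
def Blocked (E : Set Edge) (e : Edge) : Prop :=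
  ∃ f ∈ E, ∃ g ∈ E, Crosses e f ∧ Crosses e g ∧ Crosses f g

theorem CrossingFree.not_blocked (hE : CrossingFree 3 E) (he : e ∈ E) : ¬Blocked E e :=
  fun h => not_crossingFree_three_iff.2 ⟨e, he, h⟩ hE

theorem Blocked.reflect (h : Blocked E e) : Blocked (reflect E) (reflectEdge e) := by
  obtain ⟨f, hf, g, hg, hcross⟩ := h
  refine ⟨reflectEdge f, ?_, reflectEdge g, ?_, by simpa only [crosses_reflectEdge_iff]⟩ <;>
    simpa [Multitriangulation.reflect, reflectEdge_involutive _]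

theorem blocked_reflect_iff : Blocked (reflect E) e ↔ Blocked E (reflectEdge e) :=
  ⟨fun h => by simpa only [reflect_involutive E] using h.reflect,
    fun h => by simpa only [reflectEdge_involutive e] using h.reflect⟩

theorem blocked_iff (hE : ValidEdges E) (hab : a < b) :
    Blocked E (a, b) ↔ ∃ c d c' d', (c, d) ∈ E ∧ (c', d') ∈ E ∧
      (a < c ∧ c < c' ∧ c' < b ∧ b < d ∧ d < d' ∨
       c < a ∧ a < c' ∧ c' < d ∧ d < b ∧ b < d' ∨
       c < c' ∧ c' < a ∧ a < d ∧ d < d' ∧ d' < b) := by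
  constructor
  · rintro ⟨⟨c, d⟩, hf, ⟨c', d'⟩, hg, hef, heg, hfg⟩
    rw [crosses_iff_of_lt hab (hE _ hf)] at hef
    rw [crosses_iff_of_lt hab (hE _ hg)] at heg
    rw [crosses_iff_of_lt (hE _ hf) (hE _ hg)] at hfg
    by_cases hcc : c < c'
    · exact ⟨c, d, c', d', hf, hg, by omega⟩
    · exact ⟨c', d', c, d, hg, hf, by omega⟩
  · rintro ⟨c, d, c', d', hf, hg, h⟩
    exact ⟨_, hf, _, hg, by simp only [Crosses]; omega⟩

theorem crossingFree_three_of_not_interleave (hE : ValidEdges E)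
    (h : ∀ a₁ a₂ a₃ b₁ b₂ b₃, (a₁, b₁) ∈ E → (a₂, b₂) ∈ E → (a₃, b₃) ∈ E →
      ¬(a₁ < a₂ ∧ a₂ < a₃ ∧ a₃ < b₁ ∧ b₁ < b₂ ∧ b₂ < b₃)) : CrossingFree 3 E := by
  by_contra hfree
  obtain ⟨⟨a, b⟩, he, hblocked⟩ := not_crossingFree_three_iff.1 hfree
  obtain ⟨c, d, c', d', hf, hg, hchain | hchain | hchain⟩ :=
    (blocked_iff hE (hE _ he)).1 hblocked
  · exact h _ _ _ _ _ _ he hf hg (by omega)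
  · exact h _ _ _ _ _ _ hf he hg (by omega)
  · exact h _ _ _ _ _ _ hf hg he (by omega)

end Blocked

section SelfCrossing

variable {n : ℕ} {E T : Set Edge} {e f g : Edge} {a b : ℤ}

theorem Periodic.shift_neg_mem (hE : Periodic n E) (t : ℤ) (he : e ∈ E) :
    shift e (-(t * n)) ∈ E := by
  rw [← neg_mul]
  exact (hE.shift_mem_iff (-t)).2 he

theorem Periodic.blocked_of_shift (hE : Periodic n E) (t : ℤ) (hf : f ∈ E) (hg : g ∈ E)
    (hef : Crosses (shift e (t * n)) f) (heg : Crosses (shift e (t * n)) g)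
    (hfg : Crosses f g) : Blocked E e :=
  ⟨_, hE.shift_neg_mem t hf, _, hE.shift_neg_mem t hg, crosses_shift_left_iff.1 hef,
    crosses_shift_left_iff.1 heg, crosses_shift_iff.2 hfg⟩

theorem eq_add_one_of_crosses_shift (he : e.1 < e.2) (hlen : e.2 - e.1 ≤ 2 * n) {s t : ℤ}
    (hst : s < t) (h : Crosses (shift e (s * n)) (shift e (t * n))) : t = s + 1 := by
  by_contra hne
  have hle : (s + 2) * n ≤ t * n := by gcongr; omega
  rw [add_mul] at hle
  simp only [Crosses, shift] at h
  omega

theorem Periodic.exists_crosses_shift (hE : Periodic n E) (he : e.1 < e.2)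
    (hlen : e.2 - e.1 ≤ 2 * n) {s t : ℤ} (hf : f ∈ E)
    (hst : Crosses (shift e (s * n)) (shift e (t * n)))
    (hsf : Crosses (shift e (s * n)) f) (htf : Crosses (shift e (t * n)) f) :
    ∃ g ∈ E, Crosses e (shift e n) ∧ Crosses e g ∧ Crosses (shift e n) g := by
  wlog hlt : s < t generalizing s t
  · have hne : s ≠ t := fun h => hst.ne (h ▸ rfl)
    exact this hst.symm htf hsf (by omega)
  obtain rfl := eq_add_one_of_crosses_shift he hlen hlt hst
  have hshift : shift e ((s + 1) * n) = shift (shift e n) (s * n) := by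
    rw [shift_shift, add_one_mul, add_comm]
  rw [hshift] at hst htf
  exact ⟨_, hE.shift_neg_mem s hf, crosses_shift_iff.1 hst, crosses_shift_left_iff.1 hsf,
    crosses_shift_left_iff.1 htf⟩

/- Among three translates of `e`, two differ by at least two periods and do not cross. Hence a
3-crossing uses at most two translates. -/
theorem blocked_or_exists_crosses_shift (hE : Periodic n E) (hfree : CrossingFree 3 E)
    (he : e.1 < e.2) (hlen : e.2 - e.1 ≤ 2 * n) (hnot : ¬CrossingFree 3 (E ∪ orbitOf n e)) :
    Blocked E e ∨ ∃ f ∈ E, Crosses e (shift e n) ∧ Crosses e f ∧ Crosses (shift e n) f := by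
  obtain ⟨e₁, h₁, e₂, h₂, e₃, h₃, h₁₂, h₁₃, h₂₃⟩ := not_crossingFree_three_iff.1 hnot
  rcases h₁ with h₁ | ⟨t₁, rfl⟩ <;> rcases h₂ with h₂ | ⟨t₂, rfl⟩ <;>
    rcases h₃ with h₃ | ⟨t₃, rfl⟩
  · exact (hfree.not_blocked h₁ ⟨_, h₂, _, h₃, h₁₂, h₁₃, h₂₃⟩).elim
  · exact .inl (hE.blocked_of_shift t₃ h₁ h₂ h₁₃.symm h₂₃.symm h₁₂)
  · exact .inl (hE.blocked_of_shift t₂ h₁ h₃ h₁₂.symm h₂₃ h₁₃)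
  · exact .inr (hE.exists_crosses_shift he hlen h₁ h₂₃ h₁₂.symm h₁₃.symm)
  · exact .inl (hE.blocked_of_shift t₁ h₂ h₃ h₁₂ h₁₃ h₂₃)
  · exact .inr (hE.exists_crosses_shift he hlen h₂ h₁₃ h₁₂ h₂₃.symm)
  · exact .inr (hE.exists_crosses_shift he hlen h₃ h₁₂ h₁₃ h₂₃)
  · have hne : ∀ {s t : ℤ}, Crosses (shift e (s * n)) (shift e (t * n)) →
        t = s + 1 ∨ s = t + 1 := by
      intro s t h
      rcases lt_trichotomy s t with hst | rfl | hst
      · exact .inl (eq_add_one_of_crosses_shift he hlen hst h)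
      · exact absurd rfl h.ne
      · exact .inr (eq_add_one_of_crosses_shift he hlen hst h.symm)
    have := hne h₁₂
    have := hne h₁₃
    have := hne h₂₃
    omega

/- An edge `[c, d]` crossing both `[a, b]` and `[a + n, b + n]` but not of the form claimed is
longer than `n`, hence crosses `[c - n, d - n]`, and these two edges block `[a, b]`. -/
theorem IsTriangulation.exists_crosses_shift_of_not_blocked (hT : IsTriangulation n 2 T)
    (hab : a < b) (hlen : b - a ≤ 2 * n) (habT : (a, b) ∉ T) (hb : ¬Blocked T (a, b)) :
    ∃ c d, (c, d) ∈ T ∧ a < c ∧ c < a + n ∧ a + n < b ∧ b < d ∧ d ≤ c + n := by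
  obtain ⟨⟨c, d⟩, hf, hshift, hcross, hcross'⟩ :=
    (blocked_or_exists_crosses_shift hT.periodic hT.crossingFree hab hlen
      (hT.not_crossingFree_union_orbitOf hab habT)).resolve_left hb
  have hcd := hT.lt hf
  have hf' := hT.periodic.sub_mem hf
  simp only [shift] at hshift hcross'
  rw [crosses_iff_of_lt hab (by omega)] at hshift
  rw [crosses_iff_of_lt hab hcd] at hcross
  rw [crosses_iff_of_lt (by omega) hcd] at hcross'
  by_contra! h
  have hshort := h c d hf
  exact hb ((blocked_iff hT.validEdges hab).2 ⟨_, _, _, _, hf', hf, by omega⟩)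

end SelfCrossing

section Fan

variable {C E : Set Edge} {L p t x q a b : ℤ}

/-- Two edges `[a, b]` and `[a', b']` of `C` that cross each other both pass over `t`. -/
def DoublyCovered (C : Set Edge) (t : ℤ) : Prop :=
  ∃ a b a' b', (a, b) ∈ C ∧ (a', b') ∈ C ∧ a < a' ∧ a' < t ∧ t < b ∧ b < b'

theorem exists_fan_succ (hx : ¬DoublyCovered C x)
    (hx' : DoublyCovered C (x + 1)) :
    ∃ a b b', (a, b) ∈ C ∧ (x, b') ∈ C ∧ a < x ∧ x + 1 < b ∧ b < b' := by
  obtain ⟨a, b, a', b', h, h', haa', ha't, htb, hbb'⟩ := hx'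
  have hxa' : ¬a' < x := fun hlt => hx ⟨a, b, a', b', h, h', haa', hlt, by omega, hbb'⟩
  obtain rfl : a' = x := by omega
  exact ⟨a, b, b', h, h', haa', htb, hbb'⟩

theorem exists_wider_fan (hC : CrossingFree 3 C) {b' : ℤ} (hx : ¬DoublyCovered C x)
    (hb : DoublyCovered C b) (h : (a, b) ∈ C) (h' : (x, b') ∈ C) (hax : a < x) (hxb : x < b)
    (hbb' : b < b') :
    ∃ c d d', (c, d) ∈ C ∧ (x, d') ∈ C ∧ c < x ∧ b < d ∧ d < d' := by
  obtain ⟨c, d, c', d', hc, hc', hcc', hc'b, hbd, hdd'⟩ := hb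
  have hxc' : ¬c' < x := fun hlt => hx ⟨c, d, c', d', hc, hc', hcc', hlt, by omega, hdd'⟩
  have hcx : c < x := by
    by_contra hxc
    exact hC.not_interleave h hc hc' (by omega)
  by_cases hdb' : d < b'
  · exact ⟨c, d, b', hc, h', hcx, hbd, hdb'⟩
  by_cases hc'x : c' = x
  · subst hc'x
    exact ⟨c, d, d', hc, hc', hcx, hbd, hdd'⟩
  · exact (hC.not_interleave h h' hc' (by omega)).elim

theorem exists_fan (hC : CrossingFree 3 C) {B : ℤ} (hx : ¬DoublyCovered C x) (hxB : x + 1 < B)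
    (hcov : ∀ t, x < t → t < B → DoublyCovered C t) :
    ∃ a b b', (a, b) ∈ C ∧ (x, b') ∈ C ∧ a < x ∧ B ≤ b ∧ b < b' := by
  by_contra! hnone
  have hbound : ∀ b, (∃ a b', (a, b) ∈ C ∧ (x, b') ∈ C ∧ a < x ∧ x < b ∧ b < b') → b ≤ B := by
    rintro b ⟨a, b', h, h', hax, -, hbb'⟩
    by_contra hB
    exact absurd (hnone a b b' h h' hax (by omega)) (by omega)
  obtain ⟨a₀, b₀, b₀', h₀, h₀', hax₀, hxb₀, hbb₀⟩ :=
    exists_fan_succ hx (hcov (x + 1) (by omega) hxB)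
  obtain ⟨b, ⟨a, b', h, h', hax, hxb, hbb'⟩, hmax⟩ := Int.exists_greatest_of_bdd ⟨B, hbound⟩
    ⟨b₀, a₀, b₀', h₀, h₀', hax₀, by omega, hbb₀⟩
  have hbB : b < B := by
    by_contra hB
    exact absurd (hnone a b b' h h' hax (by omega)) (by omega)
  obtain ⟨c, d, d', hc, hc', hcx, hbd, hdd'⟩ :=
    exists_wider_fan hC hx (hcov b hxb hbB) h h' hax hxb hbb'
  exact absurd (hmax d ⟨c, d', hc, hc', hcx, by omega, hdd'⟩) (by omega)

/-- The edges of `E` with an endpoint in `(p, p + L)`, in the cyclic order of `ℤ` cut open at `p`: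
an endpoint `c < p` is moved to `c + 3 * L`, beyond every endpoint on the right, provided that the
edges of `E` have length at most `L`. Crossings, being a cyclic notion, are preserved, and an edge
crosses `[p, t]` if and only if it passes over `t` once cut open. -/
def cutAt (L p : ℤ) (E : Set Edge) : Set Edge :=
  {e | p < e.1 ∧ e.1 < p + L ∧ (e ∈ E ∨ e.2 - 3 * L < p ∧ (e.2 - 3 * L, e.1) ∈ E)}

theorem mem_cutAt_iff (hE : ValidEdges E) (hL : ∀ e ∈ E, e.2 - e.1 ≤ L) :
    (a, b) ∈ cutAt L p E ↔ p < a ∧ a < p + L ∧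
      ((a, b) ∈ E ∧ a < b ∧ b < p + 2 * L ∨
        (b - 3 * L, a) ∈ E ∧ p + 2 * L < b ∧ b < p + 3 * L) := by
  have hright (h : (a, b) ∈ E) := And.intro (hE _ h) (hL _ h)
  have hleft (h : (b - 3 * L, a) ∈ E) := hL _ h
  constructor
  · rintro ⟨hpa, haL, h | ⟨hb, h⟩⟩
    · have := hright h
      exact ⟨hpa, haL, .inl ⟨h, by omega, by omega⟩⟩
    · have := hleft h
      exact ⟨hpa, haL, .inr ⟨h, by omega, by omega⟩⟩
  · rintro ⟨hpa, haL, ⟨h, -⟩ | ⟨h, -, hb⟩⟩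
    · exact ⟨hpa, haL, .inl h⟩
    · exact ⟨hpa, haL, .inr ⟨by dsimp only; omega, h⟩⟩

theorem mem_cutAt_of_lt (h : (a, b) ∈ E) (hpa : p < a) (haL : a < p + L) :
    (a, b) ∈ cutAt L p E :=
  ⟨hpa, haL, .inl h⟩

theorem mem_cutAt_of_gt (hL : ∀ e ∈ E, e.2 - e.1 ≤ L) (h : (a, b) ∈ E) (hap : a < p)
    (hpb : p < b) : (b, a + 3 * L) ∈ cutAt L p E := by
  have := hL _ h
  exact ⟨hpb, by dsimp only at *; omega, .inr ⟨by simpa using hap, by simpa using h⟩⟩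

theorem crossingFree_cutAt (hE : ValidEdges E) (hL : ∀ e ∈ E, e.2 - e.1 ≤ L)
    (hfree : CrossingFree 3 E) : CrossingFree 3 (cutAt L p E) := by
  refine crossingFree_three_of_not_interleave ?_ ?_
  · rintro ⟨a, b⟩ h
    rw [mem_cutAt_iff hE hL] at h
    dsimp only
    omega
  · intro a₁ a₂ a₃ b₁ b₂ b₃ h₁ h₂ h₃ hchain
    rw [mem_cutAt_iff hE hL] at h₁ h₂ h₃
    obtain ⟨hp₁, -, h₁ | h₁⟩ := h₁ <;> obtain ⟨-, -, h₂ | h₂⟩ := h₂ <;>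
      obtain ⟨-, -, h₃ | h₃⟩ := h₃ <;> try omega
    · exact hfree.not_interleave h₁.1 h₂.1 h₃.1 hchain
    · exact hfree.not_interleave h₃.1 h₁.1 h₂.1 (by omega)
    · exact hfree.not_interleave h₂.1 h₃.1 h₁.1 (by omega)
    · exact hfree.not_interleave h₁.1 h₂.1 h₃.1 (by omega)

theorem blocked_iff_doublyCovered_cutAt (hE : ValidEdges E) (hL : ∀ e ∈ E, e.2 - e.1 ≤ L)
    (hpt : p < t) (htL : t ≤ p + L) :
    Blocked E (p, t) ↔ DoublyCovered (cutAt L p E) t := by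
  rw [blocked_iff hE hpt]
  constructor
  · rintro ⟨c, d, c', d', hf, hg, h | h | h⟩
    · exact ⟨c, d, c', d', mem_cutAt_of_lt hf (by omega) (by omega),
        mem_cutAt_of_lt hg (by omega) (by omega), by omega⟩
    · have := hL _ hg
      have := hL _ hf
      exact ⟨c', d', d, c + 3 * L, mem_cutAt_of_lt hg (by omega) (by omega),
        mem_cutAt_of_gt hL hf (by omega) (by omega), by dsimp only at *; omega⟩
    · have := hL _ hf
      exact ⟨d, c + 3 * L, d', c' + 3 * L, mem_cutAt_of_gt hL hf (by omega) (by omega),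
        mem_cutAt_of_gt hL hg (by omega) (by omega), by dsimp only at *; omega⟩
  · rintro ⟨a, b, a', b', h, h', hchain⟩
    rw [mem_cutAt_iff hE hL] at h h'
    obtain ⟨hpa, -, h | h⟩ := h <;> obtain ⟨hpa', -, h' | h'⟩ := h'
    · exact ⟨_, _, _, _, h.1, h'.1, by omega⟩
    · exact ⟨_, _, _, _, h'.1, h.1, by omega⟩
    · omega
    · exact ⟨_, _, _, _, h.1, h'.1, by omega⟩

theorem exists_mem_of_consecutive_not_blocked (hE : ValidEdges E)
    (hL : ∀ e ∈ E, e.2 - e.1 ≤ L) (hfree : CrossingFree 3 E) (hpx : p < x) (hxq : x + 1 < q)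
    (hqL : q ≤ p + L) (hx : ¬Blocked E (p, x)) (hq : ¬Blocked E (p, q))
    (hblocked : ∀ t, x < t → t < q → Blocked E (p, t)) :
    (∃ a, p < a ∧ a < x ∧ (a, q) ∈ E) ∧
      ∃ b, (x, b) ∈ E ∧ q < b ∨ (b, x) ∈ E ∧ b < p := by
  rw [blocked_iff_doublyCovered_cutAt hE hL (by omega) (by omega)] at hx hq
  obtain ⟨a, b, b', h, h', hax, hqb, hbb'⟩ :=
    exists_fan (crossingFree_cutAt hE hL hfree) hx hxq fun t hxt htq =>
      (blocked_iff_doublyCovered_cutAt hE hL (by omega) (by omega)).1 (hblocked t hxt htq)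
  have hbq : ¬q < b := fun hlt => hq ⟨a, b, x, b', h, h', hax, by omega, hlt, hbb'⟩
  obtain rfl : b = q := by omega
  rw [mem_cutAt_iff hE hL] at h h'
  obtain ⟨hpa, -, h | h⟩ := h
  · refine ⟨⟨a, hpa, hax, h.1⟩, ?_⟩
    obtain ⟨-, -, h' | h'⟩ := h'
    · exact ⟨b', .inl ⟨h'.1, hbb'⟩⟩
    · exact ⟨b' - 3 * L, .inr ⟨h'.1, by omega⟩⟩
  · omega

end Fan

section BlockedOfNotMem

variable {n : ℕ} {E T : Set Edge} {a b c d m p q t x : ℤ}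

theorem IsTriangulation.sub_le (hT : IsTriangulation n 2 T) (hn : 1 ≤ n) (h : (a, b) ∈ T) :
    b - a ≤ 2 * n :=
  hT.length_le hn h

/- Otherwise there is a fan of edges `[c, d]`, `[m, d']` with `a + 2n < d < d'`, whose translates by
`-2n` block `[a, m]`. -/
theorem exists_not_blocked_of_leftmost (hE : ValidEdges E) (hper : Periodic n E)
    (hfree : CrossingFree 3 E) (hn : 1 ≤ n) (ham : a < m) (hlen : m - a < 2 * n)
    (hm : ¬Blocked E (a, m)) (hleft : ∀ t, (t, m) ∈ E → a ≤ t) :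
    ∃ t, m < t ∧ t ≤ a + 2 * n ∧ ¬Blocked E (a, t) := by
  by_contra! hblocked
  have hL : ∀ e ∈ E, e.2 - e.1 ≤ 2 * n := fun e he => hfree.length_le hper hn he
  have hm' := mt (blocked_iff_doublyCovered_cutAt hE hL ham (by omega)).2 hm
  obtain ⟨c, d, d', h, h', hcm, hd, hdd'⟩ :=
    exists_fan (B := a + 2 * n + 1) (crossingFree_cutAt hE hL hfree) hm' (by omega)
      fun t hmt htB => (blocked_iff_doublyCovered_cutAt hE hL (by omega) (by omega)).1
        (hblocked t hmt (by omega))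
  rw [mem_cutAt_iff hE hL] at h h'
  obtain ⟨-, -, ⟨h, -, -⟩ | h⟩ := h <;> obtain ⟨-, -, ⟨h', -, hd'⟩ | h'⟩ := h'
  · have hf := hper.sub_mem (hper.sub_mem h)
    have hg := hper.sub_mem (hper.sub_mem h')
    have hlen' := hL _ h'
    have hne : d' - n - n ≠ m := fun heq => by
      have := hleft _ (heq ▸ hg)
      omega
    exact hm ((blocked_iff hE ham).2 ⟨_, _, _, _, hf, hg, by dsimp only at hlen'; omega⟩)
  · have := hleft _ h'.1
    omega
  · omega
  · have := hleft _ h'.1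
    omega

theorem lt_of_mem_of_not_blocked (hE : ValidEdges E) (hper : Periodic n E)
    (hfree : CrossingFree 3 E) (hab : a < b) (hb : ¬Blocked E (a, b)) (hcd : (c, d) ∈ E)
    (hac : a < c) (hca : c < a + n) (hanb : a + n < b) (hbd : b < d) (hdc : d ≤ c + n)
    (haq : (a, q) ∈ E) (hbq : b < q) : d < q := by
  have haq' := hper.add_mem haq
  by_contra! hqd
  rcases hqd.lt_or_eq with hqd | rfl
  · exact hfree.not_interleave haq hcd haq' (by omega)
  · exact hb ((blocked_iff hE hab).2 ⟨_, _, _, _, hcd, haq', by omega⟩)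

theorem IsTriangulation.le_of_mem_of_not_blocked (hT : IsTriangulation n 2 T) (hn : 1 ≤ n)
    (hab : a < b) (hlen : b - a ≤ 2 * n) (habT : (a, b) ∉ T) (hb : ¬Blocked T (a, b))
    (hmax : ∀ s, b < s → s ≤ a + 2 * n → (a, s) ∉ T → Blocked T (a, s)) (ht : (a, t) ∈ T) :
    t ≤ b := by
  by_contra! hbt
  obtain ⟨q, ⟨haq, hbq⟩, hleast⟩ := Int.exists_least_of_bdd
    (P := fun s => (a, s) ∈ T ∧ b < s) ⟨b, fun _ hs => hs.2.le⟩ ⟨t, ht, hbt⟩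
  have hq := hT.sub_le hn haq
  have hlt {c d : ℤ} (hcd : (c, d) ∈ T) (hac : a < c) (hca : c < a + n) (hanb : a + n < b)
      (hbd : b < d) (hdc : d ≤ c + n) : d < q :=
    lt_of_mem_of_not_blocked hT.validEdges hT.periodic hT.crossingFree hab hb hcd hac hca hanb
      hbd hdc haq hbq
  obtain ⟨c, d, hcd, hac, hca, hanb, hbd, hdc⟩ :=
    hT.exists_crosses_shift_of_not_blocked hab hlen habT hb
  have hdq := hlt hcd hac hca hanb hbd hdc
  obtain ⟨⟨α, haα, hαb, hαq⟩, β, hβ⟩ := exists_mem_of_consecutive_not_blocked hT.validEdges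
    (fun _ he => hT.sub_le hn he) hT.crossingFree hab (by omega) (by omega) hb
    (hT.crossingFree.not_blocked haq) fun s hbs hsq =>
      hmax s hbs (by omega) fun hs => absurd (hleast s ⟨hs, hbs⟩) (by omega)
  have hαc : α ≤ c := by
    by_contra! hcα
    rcases hβ with ⟨hbβ, hqβ⟩ | ⟨hβb, hβa⟩
    · exact hT.crossingFree.not_interleave hcd hαq hbβ (by omega)
    · exact hT.crossingFree.not_interleave hβb hcd hαq (by omega)
  by_cases hqα : q ≤ α + n
  · exact (hlt hαq haα (by omega) hanb hbq hqα).false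
  · exact hb ((blocked_iff hT.validEdges hab).2
      ⟨_, _, _, _, hT.periodic.sub_mem hαq, hαq, by omega⟩)

theorem IsTriangulation.mem_or_blocked_of_longer (hT : IsTriangulation n 2 T) (hn : 1 ≤ n)
    (hab : a < b) (hlen : b - a ≤ 2 * n)
    (hlonger : ∀ s t, b - a < t - s → t - s ≤ 2 * n → (s, t) ∉ T → Blocked T (s, t)) :
    (a, b) ∈ T ∨ Blocked T (a, b) := by
  by_contra! h
  obtain ⟨habT, hb⟩ := h
  have hright : ∀ t, (a, t) ∈ T → t ≤ b := fun t =>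
    hT.le_of_mem_of_not_blocked hn hab hlen habT hb fun s hbs hs =>
      hlonger a s (by omega) (by omega)
  have hleft : ∀ t, (t, b) ∈ T → a ≤ t := fun t ht => by
    have hle : -t ≤ -a := hT.reflect.le_of_mem_of_not_blocked (a := -b) hn (by omega) (by omega)
      (by simpa [mem_reflect] using habT) (by simpa [blocked_reflect_iff, reflectEdge] using hb)
      (fun s hs hlen hsT => blocked_reflect_iff.2 <|
        hlonger (-s) (- -b) (by omega) (by omega) hsT)
      (by simpa [mem_reflect] using ht)
    omega
  obtain ⟨c, d, -, -, hca, -, hbd, hdc⟩ :=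
    hT.exists_crosses_shift_of_not_blocked hab hlen habT hb
  obtain ⟨t, hbt, hta, ht⟩ := exists_not_blocked_of_leftmost hT.validEdges hT.periodic
    hT.crossingFree hn hab (by omega) hb hleft
  exact ht (hlonger a t (by omega) (by omega) fun haT => absurd (hright t haT) (by omega))

theorem IsTriangulation.blocked_of_notMem (hT : IsTriangulation n 2 T) (hn : 1 ≤ n) (hab : a < b)
    (hlen : b - a ≤ 2 * n) (habT : (a, b) ∉ T) : Blocked T (a, b) := by
  generalize hk : (2 * n - (b - a)).toNat = k
  induction k using Nat.strong_induction_on generalizing a b with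
  | _ k ih =>
    refine (hT.mem_or_blocked_of_longer hn hab hlen fun s t hst hlen' hstT => ?_).resolve_left habT
    exact ih _ (by omega) (by omega) hlen' hstT rfl

theorem IsTriangulation.exists_mem_of_consecutive (hT : IsTriangulation n 2 T) (hn : 1 ≤ n)
    (hpx : (p, x) ∈ T) (hpq : (p, q) ∈ T) (hlen : 2 ≤ x - p) (hxq : x < q)
    (hnext : ∀ z, (p, z) ∈ T → x < z → q ≤ z) :
    (∃ a, p < a ∧ a < x ∧ (a, q) ∈ T) ∧
      ∃ b, (x, b) ∈ T ∧ q < b ∨ (b, x) ∈ T ∧ b < p := by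
  have hq := hT.sub_le hn hpq
  rcases (show x + 1 ≤ q by omega).lt_or_eq with hlt | rfl
  · exact exists_mem_of_consecutive_not_blocked hT.validEdges (fun _ he => hT.sub_le hn he)
      hT.crossingFree (by omega) hlt (by omega) (hT.crossingFree.not_blocked hpx)
      (hT.crossingFree.not_blocked hpq) fun t hxt htq =>
        hT.blocked_of_notMem hn (by omega) (by omega) fun ht =>
          absurd (hnext t ht hxt) (by omega)
  · exact ⟨⟨x - 1, by omega, by omega, hT.mem_of_length_le (by simp) (by simp)⟩,
      x + 2, .inl ⟨hT.mem_of_length_le (by simp) (by simp), by omega⟩⟩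

end BlockedOfNotMem

section Star

variable {n : ℕ} {E T : Set Edge} {m m' p p' q q' : ℤ}

/-- `[p, q]` is the edge `[s₀, s₃]` of a 2-star `s₀ < s₁ < s₂ < s₃ < s₄` of `E`, a closed chain
`s₀, s₂, s₄, s₁, s₃` of angles, with middle vertex `m = s₂`. Only `[s₀, s₂]` and `[s₀, s₃]`
appear: `s₀` is the leftmost neighbour of `s₂`, and `s₃` follows `s₂` among the neighbours of
`s₀`. -/
structure LeftStarEdge (E : Set Edge) (m p q : ℤ) : Prop where
  mem_middle : (p, m) ∈ E
  mem : (p, q) ∈ E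
  lt : m < q
  le_of_lt : ∀ z, (p, z) ∈ E → m < z → q ≤ z
  leftmost : ∀ z, (z, m) ∈ E → p ≤ z

/-- `[p, q]` is the edge `[s₁, s₄]` of a 2-star `s₀ < s₁ < s₂ < s₃ < s₄` of `E` with middle vertex
`m = s₂`; this is the mirror image of `LeftStarEdge`. -/
structure RightStarEdge (E : Set Edge) (m p q : ℤ) : Prop where
  mem_middle : (m, q) ∈ E
  mem : (p, q) ∈ E
  lt : p < m
  le_of_lt : ∀ z, (z, q) ∈ E → z < m → z ≤ p
  rightmost : ∀ z, (m, z) ∈ E → z ≤ q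

theorem rightStarEdge_iff_reflect :
    RightStarEdge E m p q ↔ LeftStarEdge (reflect E) (-m) (-q) (-p) := by
  constructor
  · intro h
    refine ⟨by simpa [mem_reflect] using h.mem_middle, by simpa [mem_reflect] using h.mem,
      neg_lt_neg h.lt, fun z hz hmz => ?_, fun z hz => ?_⟩
    · have := h.le_of_lt (-z) (by simpa [mem_reflect] using hz) (by omega)
      omega
    · have := h.rightmost (-z) (by simpa [mem_reflect] using hz)
      omega
  · intro h
    refine ⟨by simpa [mem_reflect] using h.mem_middle, by simpa [mem_reflect] using h.mem,
      neg_lt_neg_iff.1 h.lt, fun z hz hzm => ?_, fun z hz => ?_⟩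
    · have := h.le_of_lt (-z) (by simpa [mem_reflect] using hz) (by omega)
      omega
    · have := h.leftmost (-z) (by simpa [mem_reflect] using hz)
      omega

theorem LeftStarEdge.middle_unique (h : LeftStarEdge E m p q) (h' : LeftStarEdge E m' p q) :
    m = m' := by
  rcases lt_trichotomy m m' with hlt | heq | hlt
  · exact absurd (h.le_of_lt _ h'.mem_middle hlt) h'.lt.not_ge
  · exact heq
  · exact absurd (h'.le_of_lt _ h.mem_middle hlt) h.lt.not_ge

theorem LeftStarEdge.edge_unique (h : LeftStarEdge E m p q) (h' : LeftStarEdge E m p' q') :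
    p = p' ∧ q = q' := by
  obtain rfl : p = p' :=
    le_antisymm (h.leftmost _ h'.mem_middle) (h'.leftmost _ h.mem_middle)
  exact ⟨rfl, le_antisymm (h.le_of_lt _ h'.mem h'.lt) (h'.le_of_lt _ h.mem h.lt)⟩

theorem RightStarEdge.middle_unique (h : RightStarEdge E m p q) (h' : RightStarEdge E m' p q) :
    m = m' :=
  neg_injective <|
    (rightStarEdge_iff_reflect.1 h).middle_unique (rightStarEdge_iff_reflect.1 h')

theorem RightStarEdge.edge_unique (h : RightStarEdge E m p q) (h' : RightStarEdge E m p' q') :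
    p = p' ∧ q = q' := by
  have := (rightStarEdge_iff_reflect.1 h).edge_unique (rightStarEdge_iff_reflect.1 h')
  omega

theorem LeftStarEdge.shift (hE : Periodic n E) (t : ℤ) (h : LeftStarEdge E m p q) :
    LeftStarEdge E (m + t * n) (p + t * n) (q + t * n) := by
  have hmem {a b : ℤ} : (a, b) ∈ E ↔ (a + t * n, b + t * n) ∈ E := (hE.add_mem_iff t).symm
  refine ⟨hmem.1 h.mem_middle, hmem.1 h.mem, by simpa using h.lt, fun z hz hmz => ?_,
    fun z hz => ?_⟩
  · have := h.le_of_lt (z - t * n) (hmem.2 (by simpa using hz)) (by omega)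
    omega
  · have := h.leftmost (z - t * n) (hmem.2 (by simpa using hz))
    omega

theorem RightStarEdge.shift (hE : Periodic n E) (t : ℤ) (h : RightStarEdge E m p q) :
    RightStarEdge E (m + t * n) (p + t * n) (q + t * n) := by
  rw [rightStarEdge_iff_reflect] at h ⊢
  simpa [add_comm] using h.shift hE.reflect (-t)

theorem LeftStarEdge.two_le (hT : IsTriangulation n 2 T) (h : LeftStarEdge T m p q) :
    2 ≤ m - p := by
  have := h.leftmost (m - 2) (hT.mem_of_length_le (by simp) (by simp))
  omega

theorem LeftStarEdge.two_lt (hT : IsTriangulation n 2 T) (h : LeftStarEdge T m p q) :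
    2 < q - p := by
  have := h.two_le hT
  have := h.lt
  omega

theorem RightStarEdge.two_lt (hT : IsTriangulation n 2 T) (h : RightStarEdge T m p q) :
    2 < q - p := by
  have := (rightStarEdge_iff_reflect.1 h).two_lt hT.reflect
  omega

theorem LeftStarEdge.exists_mem (hT : IsTriangulation n 2 T) (hn : 1 ≤ n)
    (h : LeftStarEdge T m p q) :
    (∃ a, p < a ∧ a < m ∧ (a, q) ∈ T) ∧ ∃ b, (m, b) ∈ T ∧ q < b := by
  obtain ⟨ha, b, hb | ⟨hbm, hbp⟩⟩ :=
    hT.exists_mem_of_consecutive hn h.mem_middle h.mem (h.two_le hT) h.lt h.le_of_lt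
  · exact ⟨ha, b, hb⟩
  · exact absurd (h.leftmost _ hbm) hbp.not_ge

theorem RightStarEdge.exists_mem (hT : IsTriangulation n 2 T) (hn : 1 ≤ n)
    (h : RightStarEdge T m p q) : ∃ a, (a, m) ∈ T ∧ a < p := by
  obtain ⟨-, b, hb, hpb⟩ := (rightStarEdge_iff_reflect.1 h).exists_mem hT.reflect hn
  exact ⟨-b, by simpa [mem_reflect] using hb, by omega⟩

theorem Periodic.sub_two_mul_mem_iff (hE : Periodic n E) :
    (m - 2 * n, m) ∈ E ↔ (m, m + 2 * n) ∈ E := by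
  simpa using (hE.add_mem_iff 2 (a := m - 2 * n) (b := m)).symm

theorem exists_leftStarEdge_iff (hT : IsTriangulation n 2 T) (hn : 1 ≤ n) :
    (∃ p q, LeftStarEdge T m p q) ↔ (m, m + 2 * n) ∉ T := by
  rw [← hT.periodic.sub_two_mul_mem_iff]
  constructor
  · rintro ⟨p, q, h⟩ hm
    have := h.leftmost _ hm
    have := h.lt
    have := hT.sub_le hn h.mem
    omega
  · intro hm
    obtain ⟨p, hpm, hleft⟩ := Int.exists_least_of_bdd (P := fun t => (t, m) ∈ T)
      ⟨m - 2 * n, fun t ht => by have := hT.sub_le hn ht; omega⟩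
      ⟨m - 1, hT.mem_of_length_le (by simp) (by simp)⟩
    have hlt := hT.lt hpm
    have hle := hT.sub_le hn hpm
    have hne : p ≠ m - 2 * n := fun heq => hm (heq ▸ hpm)
    obtain ⟨t, hmt, htp, ht⟩ := exists_not_blocked_of_leftmost hT.validEdges hT.periodic
      hT.crossingFree hn hlt (by omega) (hT.crossingFree.not_blocked hpm) hleft
    have hpt : (p, t) ∈ T := by
      by_contra hpt
      exact ht (hT.blocked_of_notMem hn (by omega) (by omega) hpt)
    obtain ⟨q, ⟨hpq, hmq⟩, hnext⟩ := Int.exists_least_of_bdd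
      (P := fun s => (p, s) ∈ T ∧ m < s) ⟨m, fun _ hs => hs.2.le⟩ ⟨t, hpt, hmt⟩
    exact ⟨p, q, hpm, hpq, hmq, fun z hz hmz => hnext z ⟨hz, hmz⟩, hleft⟩

theorem exists_rightStarEdge_iff (hT : IsTriangulation n 2 T) (hn : 1 ≤ n) :
    (∃ p q, RightStarEdge T m p q) ↔ (m, m + 2 * n) ∉ T := by
  have hbase : (-m, -m + 2 * n) ∈ reflect T ↔ (m, m + 2 * n) ∈ T := by
    rw [← hT.periodic.sub_two_mul_mem_iff, mem_reflect]
    simp [sub_eq_add_neg, add_comm]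
  rw [← hbase, ← exists_leftStarEdge_iff hT.reflect hn]
  constructor
  · rintro ⟨p, q, h⟩
    exact ⟨-q, -p, rightStarEdge_iff_reflect.1 h⟩
  · rintro ⟨p, q, h⟩
    exact ⟨-q, -p, rightStarEdge_iff_reflect.2 (by simpa using h)⟩

/- If `[p, q]` belonged to two stars, with middle vertices `y < x`, then the right edge `[s, e]` at
`x` and the left edge `[g, r]` at `y` would form a 3-crossing with two of the edges `[p, x]`,
`[p, q]` and `[y, q]`. -/
theorem LeftStarEdge.not_rightStarEdge (hT : IsTriangulation n 2 T) (hn : 1 ≤ n) {x y : ℤ}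
    (hx : LeftStarEdge T x p q) : ¬RightStarEdge T y p q := by
  intro hy
  obtain ⟨⟨α, hpα, hαx, hαq⟩, β, hxβ, hqβ⟩ := hx.exists_mem hT hn
  obtain ⟨γ, hγy, hγp⟩ := hy.exists_mem hT hn
  obtain ⟨s, e, hs⟩ :=
    (exists_rightStarEdge_iff hT hn).2 ((exists_leftStarEdge_iff hT hn).1 ⟨p, q, hx⟩)
  obtain ⟨g, r, hg⟩ :=
    (exists_leftStarEdge_iff hT hn).2 ((exists_rightStarEdge_iff hT hn).1 ⟨p, q, hy⟩)
  have hyx : y < x := by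
    by_contra hxy
    exact absurd (hy.le_of_lt α hαq (by omega)) hpα.not_ge
  have hβe := hs.rightmost _ hxβ
  have hgγ := hg.leftmost _ hγy
  have hps : p < s := by
    obtain ⟨γ', hγ'x, hγ's⟩ := hs.exists_mem hT hn
    exact (hx.leftmost _ hγ'x).trans_lt hγ's
  have hrq : r < q := by
    obtain ⟨-, β', hyβ', hrβ'⟩ := hg.exists_mem hT hn
    exact hrβ'.trans_le (hy.rightmost _ hyβ')
  have hsx := hs.lt
  have hyr := hg.lt
  have hpy := hy.lt
  have hxq := hx.lt
  rcases lt_trichotomy s y with _ | rfl | _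
  · rcases lt_trichotomy r x with _ | rfl | _
    · exact hT.crossingFree.not_interleave hg.mem hx.mem_middle hy.mem_middle (by omega)
    · have := hx.leftmost _ hg.mem
      omega
    · exact hT.crossingFree.not_interleave hg.mem hx.mem hs.mem (by omega)
  · have := hy.rightmost _ hs.mem
    omega
  · exact hT.crossingFree.not_interleave hx.mem_middle hy.mem_middle hs.mem (by omega)

/- Take for `x` the neighbour of `p` preceding `q` and for `y` the neighbour of `q` following `p`.
If `x` had a neighbour left of `p` and `y` one right of `q`, these two edges would form a
3-crossing with `[p, q]`. -/
theorem exists_leftStarEdge_or_rightStarEdge (hT : IsTriangulation n 2 T) (hn : 1 ≤ n)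
    (hpq : (p, q) ∈ T) (hlen : 2 < q - p) :
    ∃ m, LeftStarEdge T m p q ∨ RightStarEdge T m p q := by
  have hp : (p, p + 2) ∈ T := hT.mem_of_length_le (by simp) (by simp)
  have hq : (q - 2, q) ∈ T := hT.mem_of_length_le (by simp) (by simp)
  obtain ⟨x, ⟨hpx, hxq⟩, hmax⟩ := Int.exists_greatest_of_bdd (P := fun t => (p, t) ∈ T ∧ t < q)
    ⟨q, fun _ ht => ht.2.le⟩ ⟨p + 2, hp, by omega⟩
  obtain ⟨y, ⟨hyq, hpy⟩, hmin⟩ := Int.exists_least_of_bdd (P := fun t => (t, q) ∈ T ∧ p < t)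
    ⟨p, fun _ ht => ht.2.le⟩ ⟨q - 2, hq, by omega⟩
  have hnext : ∀ z, (p, z) ∈ T → x < z → q ≤ z := fun z hz hxz => by
    by_contra! hzq
    exact hxz.not_ge (hmax z ⟨hz, hzq⟩)
  have hprev : ∀ z, (z, q) ∈ T → z < y → z ≤ p := fun z hz hzy => by
    by_contra! hpz
    exact hzy.not_ge (hmin z ⟨hz, hpz⟩)
  have hp2x := hmax _ ⟨hp, by omega⟩
  obtain ⟨⟨a, hpa, hax, haq⟩, -⟩ :=
    hT.exists_mem_of_consecutive hn hpx hpq (by omega) hxq hnext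
  have hya := hmin _ ⟨haq, hpa⟩
  by_cases hleft : ∀ z, (z, x) ∈ T → p ≤ z
  · exact ⟨x, .inl ⟨hpx, hpq, hxq, hnext, hleft⟩⟩
  by_cases hright : ∀ z, (y, z) ∈ T → z ≤ q
  · exact ⟨y, .inr ⟨hyq, hpq, hpy, hprev, hright⟩⟩
  push Not at hleft hright
  obtain ⟨z, hzx, hzp⟩ := hleft
  obtain ⟨w, hyw, hqw⟩ := hright
  exact (hT.crossingFree.not_interleave hzx hpq hyw (by omega)).elim

/- The right endpoint `m` of an edge of greatest length works: a star at `m` would provide a longer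
edge. -/
theorem exists_mem_length_eq_two_mul (hT : IsTriangulation n 2 T) (hn : 1 ≤ n) :
    ∃ v : ℤ, (v, v + 2 * n) ∈ T := by
  by_contra! hnone
  obtain ⟨l, ⟨a, ha⟩, hmax⟩ := Int.exists_greatest_of_bdd (P := fun l => ∃ a, (a, a + l) ∈ T)
    ⟨2 * n, fun l ⟨a, ha⟩ => by have := hT.sub_le hn ha; omega⟩
    ⟨1, 0, hT.mem_of_length_le (by simp) (by simp)⟩
  obtain ⟨p, q, h⟩ := (exists_leftStarEdge_iff hT hn).2 (hnone (a + l))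
  have hpa := h.leftmost _ ha
  have hlq := h.lt
  have := hmax (q - p) ⟨p, by simpa using h.mem⟩
  omega

theorem setOf_mem_Ico_notMem_eq_Ioo (hT : IsTriangulation n 2 T) {v : ℤ}
    (hv : (v, v + 2 * n) ∈ T) :
    {m ∈ Set.Ico v (v + n) | (m, m + 2 * n) ∉ T} = Set.Ioo v (v + n) := by
  ext m
  constructor
  · rintro ⟨⟨hvm, hmn⟩, hm⟩
    exact ⟨hvm.lt_of_ne (by rintro rfl; exact hm hv), hmn⟩
  · rintro ⟨hvm, hmn⟩
    exact ⟨⟨hvm.le, hmn⟩, fun hm =>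
      hT.crossingFree.not_interleave hv hm (hT.periodic.add_mem hv) (by omega)⟩

end Star

section Counting

variable {n : ℕ} {A B T : Set Edge}

theorem encard_image_orbitOf (hn : 1 ≤ n) {R : ℤ → Edge → Prop}
    (hshift : ∀ {m e} (t : ℤ), R m e → R (m + t * n) (shift e (t * n)))
    (hR : Relator.BiUnique R) (v : ℤ) :
    (orbitOf n '' {e | ∃ m, R m e}).encard = {m ∈ Set.Ico v (v + n) | ∃ e, R m e}.encard := by
  set S := {m ∈ Set.Ico v (v + n) | ∃ e, R m e}
  have hwindow (m : ℤ) : ∃! t : ℤ, m + t * n ∈ Set.Ico v (v + n) := by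
    simpa using existsUnique_add_zsmul_mem_Ico (show (0 : ℤ) < n by omega) m v
  choose! g hg using fun m (hm : m ∈ S) => hm.2
  have himage : orbitOf n '' {e | ∃ m, R m e} = (orbitOf n ∘ g) '' S := by
    apply subset_antisymm
    · rintro _ ⟨e, ⟨m, he⟩, rfl⟩
      obtain ⟨t, ht, -⟩ := hwindow m
      have hmS : m + t * n ∈ S := ⟨ht, _, hshift t he⟩
      refine ⟨_, hmS, ?_⟩
      rw [Function.comp_apply, hR.2 (hg _ hmS) (hshift t he), orbitOf_shift]
    · rintro _ ⟨m, hm, rfl⟩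
      exact ⟨g m, ⟨m, hg m hm⟩, rfl⟩
  have hinj : Set.InjOn (orbitOf n ∘ g) S := by
    intro m hm m' hm' heq
    obtain ⟨t, ht⟩ := orbitOf_eq_orbitOf_iff.1 heq
    have hm't : m' = m + t * n := hR.1 (hg m' hm') (ht ▸ hshift t (hg m hm))
    have ht0 : t = 0 := (hwindow m).unique (hm't ▸ hm'.1) (by simpa using hm.1)
    simpa [ht0] using hm't.symm
  rw [himage, hinj.encard_image]

theorem encard_image_orbitOf_union (hA : Periodic n A) (hAB : Disjoint A B) :
    (orbitOf n '' (A ∪ B)).encard = (orbitOf n '' A).encard + (orbitOf n '' B).encard := by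
  rw [Set.image_union, Set.encard_union_eq]
  rw [Set.disjoint_left]
  rintro _ ⟨e, he, rfl⟩ ⟨f, hf, hfe⟩
  obtain ⟨t, rfl⟩ := orbitOf_eq_orbitOf_iff.1 hfe.symm
  exact Set.disjoint_left.1 hAB ((hA.shift_mem_iff t).2 he) hf

theorem periodic_length_eq (l : ℤ) : Periodic n {e | e.2 - e.1 = l} := fun e => by
  simp [shift]

theorem encard_image_orbitOf_length_eq (hn : 1 ≤ n) (l : ℤ) :
    (orbitOf n '' {e | e.2 - e.1 = l}).encard = n := by
  have hset : {e : Edge | e.2 - e.1 = l} = {e | ∃ m, e = (m, m + l)} := by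
    ext ⟨a, b⟩
    simp only [Set.mem_ofPred_eq, Prod.mk.injEq]
    exact ⟨fun h => ⟨a, rfl, by omega⟩, by rintro ⟨m, rfl, rfl⟩; omega⟩
  rw [hset, encard_image_orbitOf hn _ ⟨_, _⟩ 0]
  · simp_rw [exists_eq, and_true, Set.ofPred_mem_eq]
    rw [← Finset.coe_Ico, Set.encard_coe_eq_coe_finsetCard, Int.card_Ico]
    simp
  · rintro m _ t rfl
    simp [shift, add_right_comm]
  · rintro m m' _ rfl h
    exact (Prod.mk.inj h).1
  · rintro m _ _ rfl rfl
    rfl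

theorem encard_Ioo_add (v : ℤ) : (Set.Ioo v (v + n)).encard = (n - 1 : ℕ) := by
  rw [← Finset.coe_Ioo, Set.encard_coe_eq_coe_finsetCard, Int.card_Ioo]
  congr 1
  omega

theorem encard_image_orbitOf_leftStarEdge (hT : IsTriangulation n 2 T) (hn : 1 ≤ n) :
    (orbitOf n '' {e | ∃ m, LeftStarEdge T m e.1 e.2}).encard = (n - 1 : ℕ) := by
  obtain ⟨v, hv⟩ := exists_mem_length_eq_two_mul hT hn
  rw [encard_image_orbitOf hn (R := fun m e => LeftStarEdge T m e.1 e.2)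
    (fun t h => h.shift hT.periodic t)
    ⟨fun _ _ _ => LeftStarEdge.middle_unique, fun _ _ _ h h' => Prod.ext_iff.2 (h.edge_unique h')⟩
    v]
  simp_rw [Prod.exists, exists_leftStarEdge_iff hT hn]
  rw [setOf_mem_Ico_notMem_eq_Ioo hT hv, encard_Ioo_add]

theorem encard_image_orbitOf_rightStarEdge (hT : IsTriangulation n 2 T) (hn : 1 ≤ n) :
    (orbitOf n '' {e | ∃ m, RightStarEdge T m e.1 e.2}).encard = (n - 1 : ℕ) := by
  obtain ⟨v, hv⟩ := exists_mem_length_eq_two_mul hT hn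
  rw [encard_image_orbitOf hn (R := fun m e => RightStarEdge T m e.1 e.2)
    (fun t h => h.shift hT.periodic t)
    ⟨fun _ _ _ => RightStarEdge.middle_unique,
      fun _ _ _ h h' => Prod.ext_iff.2 (h.edge_unique h')⟩ v]
  simp_rw [Prod.exists, exists_rightStarEdge_iff hT hn]
  rw [setOf_mem_Ico_notMem_eq_Ioo hT hv, encard_Ioo_add]

theorem periodic_leftStarEdge (hT : Periodic n T) :
    Periodic n {e | ∃ m, LeftStarEdge T m e.1 e.2} := fun e =>
  ⟨fun ⟨m, h⟩ => ⟨m + n, by simpa [shift] using h.shift hT 1⟩,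
    fun ⟨m, h⟩ => ⟨m - n, by simpa [shift, sub_eq_add_neg] using h.shift hT (-1)⟩⟩

theorem relevant_eq_leftStarEdge_union_rightStarEdge (hT : IsTriangulation n 2 T) (hn : 1 ≤ n) :
    {e ∈ T | 2 < e.2 - e.1 ∧ e.2 - e.1 ≤ 2 * (n : ℤ)} =
      {e | ∃ m, LeftStarEdge T m e.1 e.2} ∪ {e | ∃ m, RightStarEdge T m e.1 e.2} := by
  ext e
  constructor
  · rintro ⟨he, hlen, -⟩
    exact exists_or.1 (exists_leftStarEdge_or_rightStarEdge hT hn he hlen)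
  · rintro (⟨m, h⟩ | ⟨m, h⟩)
    · exact ⟨h.mem, h.two_lt hT, hT.sub_le hn h.mem⟩
    · exact ⟨h.mem, h.two_lt hT, hT.sub_le hn h.mem⟩

theorem encard_image_orbitOf_relevant (hT : IsTriangulation n 2 T) (hn : 1 ≤ n) :
    (orbitOf n '' {e ∈ T | 2 < e.2 - e.1 ∧ e.2 - e.1 ≤ 2 * (n : ℤ)}).encard =
      (2 * (n - 1) : ℕ) := by
  have hdisj : Disjoint {e : Edge | ∃ m, LeftStarEdge T m e.1 e.2}
      {e | ∃ m, RightStarEdge T m e.1 e.2} :=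
    Set.disjoint_left.2 fun _ ⟨_, h⟩ ⟨_, h'⟩ => h.not_rightStarEdge hT hn h'
  rw [relevant_eq_leftStarEdge_union_rightStarEdge hT hn,
    encard_image_orbitOf_union (periodic_leftStarEdge hT.periodic) hdisj,
    encard_image_orbitOf_leftStarEdge hT hn, encard_image_orbitOf_rightStarEdge hT hn, two_mul,
    Nat.cast_add]

theorem IsTriangulation.eq_short_union_relevant (hT : IsTriangulation n 2 T) (hn : 1 ≤ n) :
    T = {e | e.2 - e.1 = 1} ∪
      ({e | e.2 - e.1 = 2} ∪ {e ∈ T | 2 < e.2 - e.1 ∧ e.2 - e.1 ≤ 2 * (n : ℤ)}) := by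
  ext e
  simp only [Set.mem_union, Set.mem_ofPred_eq]
  constructor
  · intro he
    have hlt := hT.validEdges e he
    have hle := hT.sub_le hn he
    simp only [he, true_and]
    omega
  · rintro (h | h | h)
    · exact hT.mem_of_length_le (by omega) (by omega)
    · exact hT.mem_of_length_le (by omega) (by omega)
    · exact h.1

end Counting

/-- The set of orbits of edges of an `n`-periodic
2-triangulation `T` under translation by `n` has exactly `2(2n−1)` elements,
of which exactly `2(n−1)` are orbits of 2-relevant edges
(edges of length `ℓ` with `2 < ℓ ≤ 2n`). -/
theorem edge_orbit_counts (n : ℕ) (hn : 1 ≤ n)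
    (T : Set Edge) (hT : IsTriangulation n 2 T) :
    ((orbitOf n) '' T).ncard = 2 * (2 * n - 1) ∧
    ((orbitOf n) '' {e ∈ T | 2 < e.2 - e.1 ∧ e.2 - e.1 ≤ 2 * (n : ℤ)}).ncard
      = 2 * (n - 1) := by
  have hrel := encard_image_orbitOf_relevant hT hn
  refine ⟨?_, by rw [Set.ncard, hrel, ENat.toNat_natCast]⟩
  have hdisj₁ : Disjoint {e : Edge | e.2 - e.1 = 1}
      ({e | e.2 - e.1 = 2} ∪ {e ∈ T | 2 < e.2 - e.1 ∧ e.2 - e.1 ≤ 2 * (n : ℤ)}) :=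
    Set.disjoint_left.2 fun e he he' => by
      simp only [Set.mem_union, Set.mem_ofPred_eq] at he he'
      omega
  have hdisj₂ : Disjoint {e : Edge | e.2 - e.1 = 2}
      {e ∈ T | 2 < e.2 - e.1 ∧ e.2 - e.1 ≤ 2 * (n : ℤ)} :=
    Set.disjoint_left.2 fun e he he' => by
      simp only [Set.mem_ofPred_eq] at he he'
      omega
  have htotal : (orbitOf n '' T).encard = n + (n + (2 * (n - 1) : ℕ)) := by
    rw [hT.eq_short_union_relevant hn, encard_image_orbitOf_union (periodic_length_eq 1) hdisj₁,
      encard_image_orbitOf_union (periodic_length_eq 2) hdisj₂, hrel,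
      encard_image_orbitOf_length_eq hn, encard_image_orbitOf_length_eq hn]
  rw [Set.ncard, htotal]
  norm_cast
  rw [ENat.toNat_natCast]
  omega

end Multitriangulation
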